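/- arXiv:0809.0551 — 4 statements merged into one kernel-verified Lean document; each statement's English description precedes it below -/
import Mathlib

section
/- Fix an integer k ≥ 1. Then the proportion scw_{n,k} / sw_{n,k} tends to (1/2) · (k+1) · (2cos(π/(k+1)) + 1) · tan²(π/(2(k+1))) as n → ∞. -/
/-! Words are walks on the letters, so counting them is a transfer matrix computation. Let `A` be the
`k × k` tridiagonal matrix of ones. Then `sw (m+1) k` is the sum of the entries of `A ^ m`
and `scw (m+1) k` is the trace of `A ^ (m+1)` (`sw_succ`, `scw_succ`).

With `θ = π / (k+1)`, the vectors `v_l = (sin ((i+1)(l+1)θ))_i` are eigenvectors of `A` with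
eigenvalues `λ_l = 1 + 2 cos ((l+1)θ)` (`stepMat_eigen`). These eigenvalues are distinct and `A` is
symmetric, so the `v_l` are orthogonal and `A ^ m = ∑ λ_l ^ m v_l v_lᵀ / |v_l|²` (`stepMat_pow`).
Hence `scw (m+1) k = ∑ λ_l ^ (m+1)` and `sw (m+1) k = ∑ c_l λ_l ^ m` with
`c_l = (∑ i, v_l i)² / |v_l|²`. Since `λ_0` strictly dominates all other eigenvalues in absolute
value, the ratio tends to `λ_0 / c_0`; finally `|v_0|² = (k+1)/2` and `∑ i, v_0 i = cot (θ/2)`.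
-/

open Real Filter Finset

/-- A word of length `n` over a `k`-letter alphabet (represented as `Fin k`,
a relabeling of `{1,…,k}`) is smooth if adjacent letters differ by at most 1. -/
def IsSmooth {n k : ℕ} (σ : Fin n → Fin k) : Prop :=
  ∀ i : ℕ, ∀ hi : i + 1 < n,
    |((σ ⟨i + 1, hi⟩ : ℕ) : ℤ) - ((σ ⟨i, Nat.lt_of_succ_lt hi⟩ : ℕ) : ℤ)| ≤ 1

/-- A word is smooth cyclic if it is smooth and its last and first letters differ
by at most 1. -/
def IsSmoothCyclic {n k : ℕ} (σ : Fin n → Fin k) : Prop :=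
  IsSmooth σ ∧ ∀ h : 0 < n,
    |((σ ⟨n - 1, Nat.sub_lt h Nat.one_pos⟩ : ℕ) : ℤ) - ((σ ⟨0, h⟩ : ℕ) : ℤ)| ≤ 1

/-- `sw n k` is the number of smooth words of length `n` over a `k`-letter alphabet. -/
noncomputable def sw (n k : ℕ) : ℕ := Nat.card {σ : Fin n → Fin k // IsSmooth σ}

/-- `scw n k` is the number of smooth cyclic words of length `n` over a `k`-letter
alphabet. -/
noncomputable def scw (n k : ℕ) : ℕ := Nat.card {σ : Fin n → Fin k // IsSmoothCyclic σ}

/-- Two words are rotation equivalent if one is a cyclic rotation of the other. -/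
def RotEquiv {n k : ℕ} (σ τ : Fin n → Fin k) : Prop :=
  ∃ r : Fin n, ∀ i : Fin n, σ i = τ (i + r)

/-- `sn n k` is the number of smooth necklaces of length `n` over a `k`-letter
alphabet, i.e. the number of rotation-equivalence classes of smooth cyclic words. -/
noncomputable def sn (n k : ℕ) : ℕ :=
  Nat.card (Quot (fun σ τ : {σ : Fin n → Fin k // IsSmoothCyclic σ} => RotEquiv σ.1 τ.1))

/-- `swF n k i` is the number of smooth words of length `n` over the alphabet
`{1,…,k}` whose first letter is `i` (letters of `Fin k` are `1`-indexed via `+1`). -/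
noncomputable def swF (n k i : ℕ) : ℕ :=
  Nat.card {σ : Fin n → Fin k // IsSmooth σ ∧ ∀ h : 0 < n, (σ ⟨0, h⟩ : ℕ) + 1 = i}

/-- `swFL n k i j` is the number of smooth words of length `n` over the alphabet
`{1,…,k}` with first letter `i` and last letter `j`. -/
noncomputable def swFL (n k i j : ℕ) : ℕ :=
  Nat.card {σ : Fin n → Fin k // IsSmooth σ ∧ ∀ h : 0 < n,
    (σ ⟨0, h⟩ : ℕ) + 1 = i ∧ (σ ⟨n - 1, Nat.sub_lt h Nat.one_pos⟩ : ℕ) + 1 = j}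

/-- Chebyshev polynomial of the second kind, as a real function, with integer index. -/
noncomputable def Ueval (r : ℤ) (t : ℝ) : ℝ := (Polynomial.Chebyshev.U ℝ r).eval t

/-! ### Counting words by powers of the transfer matrix -/

/-- The transfer matrix: entry `1` when two letters may be adjacent, and `0` otherwise. -/
noncomputable def stepMat (k : ℕ) : Matrix (Fin k) (Fin k) ℝ :=
  fun i j => if |((j : ℕ) : ℤ) - ((i : ℕ) : ℤ)| ≤ 1 then 1 else 0

/-- Summing any function `F` of the end points over all walks of `m` steps, weighted by a matrix,
amounts to pairing `F` with the `m`-th power of the matrix. -/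
lemma sum_walks {k : ℕ} (A : Matrix (Fin k) (Fin k) ℝ) (m : ℕ) (F : Fin k → Fin k → ℝ) :
    ∑ σ : Fin (m + 1) → Fin k, (∏ l : Fin m, A (σ l.castSucc) (σ l.succ)) * F (σ 0) (σ (Fin.last m))
      = ∑ i, ∑ j, (A ^ m) i j * F i j := by
  induction m generalizing F with
  | zero =>
    rw [← (Equiv.funUnique (Fin 1) (Fin k)).symm.sum_comp]
    simp [Matrix.one_apply]
  | succ m ih =>
    rw [← (Fin.consEquiv (fun _ : Fin (m + 2) => Fin k)).sum_comp, Fintype.sum_prod_type]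
    refine Finset.sum_congr rfl fun a _ => ?_
    have h := ih (fun i j => A a i * F a j)
    have e : ∀ τ : Fin (m + 1) → Fin k,
        (∏ l : Fin (m + 1), A ((Fin.consEquiv (fun _ : Fin (m + 2) => Fin k)) (a, τ) l.castSucc)
          ((Fin.consEquiv (fun _ : Fin (m + 2) => Fin k)) (a, τ) l.succ)) *
          F ((Fin.consEquiv (fun _ : Fin (m + 2) => Fin k)) (a, τ) 0)
            ((Fin.consEquiv (fun _ : Fin (m + 2) => Fin k)) (a, τ) (Fin.last (m + 1)))
        = (∏ l : Fin m, A (τ l.castSucc) (τ l.succ)) * (A a (τ 0) * F a (τ (Fin.last m))) := by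
      intro τ
      rw [Fin.prod_univ_succ]
      simp only [Fin.consEquiv, Equiv.coe_fn_mk, Fin.castSucc_zero, Fin.cons_zero, Fin.cons_succ,
        ← Fin.succ_castSucc, ← Fin.succ_last]
      ring
    rw [Finset.sum_congr rfl fun τ _ => e τ, h, Finset.sum_comm]
    refine Finset.sum_congr rfl fun j _ => ?_
    rw [pow_succ', Matrix.mul_apply, Finset.sum_mul]
    exact Finset.sum_congr rfl fun i _ => by ring

lemma prod_stepMat {k m : ℕ} (σ : Fin (m + 1) → Fin k) [Decidable (IsSmooth σ)] :
    ∏ l : Fin m, stepMat k (σ l.castSucc) (σ l.succ) = if IsSmooth σ then 1 else 0 := by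
  split_ifs with h
  · refine Finset.prod_eq_one fun l _ => ?_
    exact if_pos (h l (by omega))
  · unfold IsSmooth at h
    push Not at h
    obtain ⟨i, hi, hlt⟩ := h
    refine Finset.prod_eq_zero (Finset.mem_univ (⟨i, by omega⟩ : Fin m)) ?_
    exact if_neg (not_le.mpr hlt)

lemma sw_succ (k m : ℕ) : (sw (m + 1) k : ℝ) = ∑ i, ∑ j, (stepMat k ^ m) i j := by
  classical
  have h := sum_walks (stepMat k) m (fun _ _ => 1)
  simp only [mul_one] at h
  rw [← h, sw, Nat.card_eq_fintype_card, Fintype.card_subtype, Finset.card_filter]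
  push_cast
  exact Finset.sum_congr rfl fun σ _ => (prod_stepMat σ).symm

lemma scw_succ (k m : ℕ) : (scw (m + 1) k : ℝ) = (stepMat k ^ (m + 1)).trace := by
  classical
  have h := sum_walks (stepMat k) m (fun i j => stepMat k j i)
  have ht : (stepMat k ^ (m + 1)).trace = ∑ i, ∑ j, (stepMat k ^ m) i j * stepMat k j i := by
    rw [pow_succ, Matrix.trace]
    simp only [Matrix.diag_apply, Matrix.mul_apply]
  rw [ht, ← h, scw, Nat.card_eq_fintype_card, Fintype.card_subtype, Finset.card_filter]
  push_cast
  refine Finset.sum_congr rfl fun σ _ => ?_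
  rw [prod_stepMat σ]
  have hc : IsSmoothCyclic σ ↔ IsSmooth σ ∧
      |((σ 0 : ℕ) : ℤ) - ((σ (Fin.last m) : ℕ) : ℤ)| ≤ 1 := by
    rw [abs_sub_comm]
    exact ⟨fun h => ⟨h.1, h.2 (Nat.succ_pos m)⟩, fun h => ⟨h.1, fun _ => h.2⟩⟩
  by_cases h1 : IsSmooth σ <;>
    by_cases h2 : |((σ 0 : ℕ) : ℤ) - ((σ (Fin.last m) : ℕ) : ℤ)| ≤ 1 <;>
    simp [hc, h1, h2, stepMat]

/-! ### Diagonalization of the transfer matrix -/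

/-- `(sin ((i+1)α))_i` is an eigenvector as soon as its continuation vanishes at index `k + 1`. -/
lemma stepMat_sin {k : ℕ} (α : ℝ) (h : sin ((k + 1 : ℝ) * α) = 0) (i : Fin k) :
    ∑ j : Fin k, stepMat k i j * sin (((j : ℕ) + 1 : ℝ) * α)
      = (1 + 2 * cos α) * sin (((i : ℕ) + 1 : ℝ) * α) := by
  -- Extending the sum by the vanishing boundary terms makes every row have three entries.
  have h1 : ∑ j : Fin k, stepMat k i j * sin (((j : ℕ) + 1 : ℝ) * α)
      = ∑ x ∈ range (k + 2),
        if |(x : ℤ) - ((i : ℕ) + 1 : ℤ)| ≤ 1 then sin ((x : ℝ) * α) else 0 := by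
    rw [Finset.sum_range_succ, Finset.sum_range_succ']
    have hb : sin (((k + 1 : ℕ) : ℝ) * α) = 0 := by push_cast; exact h
    simp only [hb, Nat.cast_zero, zero_mul, sin_zero, ite_self, add_zero]
    rw [← Fin.sum_univ_eq_sum_range (fun x : ℕ =>
      if |((x + 1 : ℕ) : ℤ) - ((i : ℕ) + 1 : ℤ)| ≤ 1 then sin (((x + 1 : ℕ) : ℝ) * α) else 0)]
    refine Finset.sum_congr rfl fun j _ => ?_
    simp [stepMat]
  have h2 : (range (k + 2)).filter (fun x : ℕ => |(x : ℤ) - ((i : ℕ) + 1 : ℤ)| ≤ 1)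
      = {(i : ℕ), (i : ℕ) + 1, (i : ℕ) + 2} := by
    ext x
    have := i.isLt
    simp only [mem_filter, mem_range, mem_insert, mem_singleton, abs_le]
    omega
  rw [h1, ← Finset.sum_filter, h2, Finset.sum_insert (by simp), Finset.sum_insert (by simp),
    Finset.sum_singleton]
  push_cast
  have e1 : ((i : ℕ) : ℝ) * α = ((i : ℕ) + 1 : ℝ) * α - α := by ring
  have e2 : (((i : ℕ) : ℝ) + 2) * α = ((i : ℕ) + 1 : ℝ) * α + α := by ring
  rw [e1, e2, sin_sub, sin_add]
  ring

/-- The angle `(l+1)π/(k+1)` attached to the `l`-th eigenvalue. -/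
noncomputable def ang (k : ℕ) (l : Fin k) : ℝ := ((l : ℕ) + 1 : ℝ) * (π / (k + 1))

/-- The `l`-th eigenvalue of the transfer matrix. -/
noncomputable def eig (k : ℕ) (l : Fin k) : ℝ := 1 + 2 * cos (ang k l)

/-- The matrix whose `l`-th column is the `l`-th eigenvector of the transfer matrix. -/
noncomputable def eigMat (k : ℕ) : Matrix (Fin k) (Fin k) ℝ :=
  fun i l => sin (((i : ℕ) + 1 : ℝ) * ang k l)

/-- The squared length of the `l`-th eigenvector. -/
noncomputable def eigNorm (k : ℕ) (l : Fin k) : ℝ := ∑ i, eigMat k i l ^ 2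

lemma ang_pos {k : ℕ} (l : Fin k) : 0 < ang k l := by
  have := pi_pos
  unfold ang; positivity

lemma ang_lt_pi {k : ℕ} (l : Fin k) : ang k l < π := by
  have h : ((l : ℕ) : ℝ) < k := by exact_mod_cast l.isLt
  have hk : (0 : ℝ) < k + 1 := by positivity
  unfold ang
  rw [← mul_div_assoc, div_lt_iff₀ hk]
  nlinarith [pi_pos]

lemma ang_strictMono {k : ℕ} : StrictMono (ang k) := by
  intro a b hab
  have h : ((a : ℕ) : ℝ) < (b : ℕ) := by exact_mod_cast hab
  have : 0 < π / ((k : ℝ) + 1) := by have := pi_pos; positivity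
  unfold ang
  gcongr

lemma eig_strictAnti {k : ℕ} : StrictAnti (eig k) := by
  intro a b hab
  have := cos_lt_cos_of_nonneg_of_le_pi (ang_pos a).le (ang_lt_pi b).le (ang_strictMono hab)
  unfold eig; linarith

lemma stepMat_eigen {k : ℕ} (i l : Fin k) :
    ∑ j, stepMat k i j * eigMat k j l = eig k l * eigMat k i l := by
  refine stepMat_sin (ang k l) ?_ i
  have hk : (k + 1 : ℝ) ≠ 0 := by positivity
  have : (k + 1 : ℝ) * ang k l = ((l + 1 : ℕ) : ℝ) * π := by
    unfold ang; push_cast; field_simp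
  rw [this, sin_nat_mul_pi]

lemma stepMat_symm {k : ℕ} (i j : Fin k) : stepMat k i j = stepMat k j i := by
  unfold stepMat; rw [abs_sub_comm]

lemma eigMat_orthogonal {k : ℕ} {a b : Fin k} (hab : a ≠ b) :
    ∑ i, eigMat k i a * eigMat k i b = 0 := by
  have h1 : ∑ i, ∑ j, eigMat k i a * stepMat k i j * eigMat k j b
      = eig k b * ∑ i, eigMat k i a * eigMat k i b := by
    rw [Finset.mul_sum]
    refine Finset.sum_congr rfl fun i _ => ?_
    simp only [mul_assoc]
    rw [← Finset.mul_sum, stepMat_eigen]; ring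
  have h2 : ∑ i, ∑ j, eigMat k i a * stepMat k i j * eigMat k j b
      = eig k a * ∑ i, eigMat k i a * eigMat k i b := by
    rw [Finset.sum_comm, Finset.mul_sum]
    refine Finset.sum_congr rfl fun j _ => ?_
    rw [← Finset.sum_mul, ← mul_assoc, ← stepMat_eigen]
    congr 1
    exact Finset.sum_congr rfl fun i _ => by rw [stepMat_symm j i]; ring
  have hne : eig k a - eig k b ≠ 0 := sub_ne_zero.mpr (eig_strictAnti.injective.ne hab)
  refine (mul_eq_zero.mp ?_).resolve_left hne
  rw [sub_mul, ← h1, ← h2, sub_self]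

lemma eigNorm_pos {k : ℕ} (l : Fin k) : 0 < eigNorm k l := by
  have hk : 0 < k := l.pos
  unfold eigNorm
  refine Finset.sum_pos' (fun _ _ => sq_nonneg _) ⟨⟨0, hk⟩, Finset.mem_univ _, ?_⟩
  have : 0 < eigMat k ⟨0, hk⟩ l := by
    simpa [eigMat] using sin_pos_of_pos_of_lt_pi (ang_pos l) (ang_lt_pi l)
  positivity

lemma eigMat_left_inv (k : ℕ) :
    (Matrix.diagonal (fun l => (eigNorm k l)⁻¹) * (eigMat k).transpose) * eigMat k = 1 := by
  ext a b
  rw [mul_assoc, Matrix.diagonal_mul, Matrix.mul_apply, Matrix.one_apply]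
  simp only [Matrix.transpose_apply]
  split_ifs with h
  · subst h
    have : ∑ i, eigMat k i a * eigMat k i a = eigNorm k a :=
      Finset.sum_congr rfl fun i _ => by ring
    rw [this, inv_mul_cancel₀ (eigNorm_pos a).ne']
  · rw [eigMat_orthogonal h, mul_zero]

/-- Spectral decomposition of the powers of the transfer matrix. -/
lemma stepMat_pow (k m : ℕ) :
    stepMat k ^ m = eigMat k * Matrix.diagonal (fun l => eig k l ^ m) *
      (Matrix.diagonal (fun l => (eigNorm k l)⁻¹) * (eigMat k).transpose) := by
  have hr := mul_eq_one_comm.mp (eigMat_left_inv k)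
  have hm : stepMat k ^ m * eigMat k = eigMat k * Matrix.diagonal (fun l => eig k l ^ m) := by
    induction m with
    | zero => simp
    | succ m ih =>
      have h1 : stepMat k * eigMat k = eigMat k * Matrix.diagonal (eig k) := by
        ext i l
        rw [Matrix.mul_apply, stepMat_eigen, Matrix.mul_diagonal, mul_comm]
      rw [pow_succ, mul_assoc, h1, ← mul_assoc, ih, mul_assoc, Matrix.diagonal_mul_diagonal]
      simp only [pow_succ]
  rw [← hm, mul_assoc, hr, mul_one]

lemma scw_eq (k m : ℕ) : (scw (m + 1) k : ℝ) = ∑ l, eig k l ^ (m + 1) := by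
  rw [scw_succ, stepMat_pow, mul_assoc, Matrix.trace_mul_comm, mul_assoc, eigMat_left_inv, mul_one,
    Matrix.trace_diagonal]

lemma sw_eq (k m : ℕ) :
    (sw (m + 1) k : ℝ) = ∑ l, (∑ i, eigMat k i l) ^ 2 / eigNorm k l * eig k l ^ m := by
  have h : ∀ i j, (stepMat k ^ m) i j
      = ∑ l, eigMat k i l * eigMat k j l * (eig k l ^ m * (eigNorm k l)⁻¹) := by
    intro i j
    rw [stepMat_pow, Matrix.mul_apply]
    refine Finset.sum_congr rfl fun l _ => ?_
    rw [Matrix.mul_diagonal, Matrix.diagonal_mul, Matrix.transpose_apply]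
    ring
  rw [sw_succ]
  simp only [h]
  rw [Finset.sum_congr rfl fun i _ => Finset.sum_comm, Finset.sum_comm]
  refine Finset.sum_congr rfl fun l _ => ?_
  simp only [← Finset.sum_mul, ← Finset.mul_sum]
  ring

/-! ### The dominant eigenvalue -/

/-- The first eigenvalue strictly dominates the others in absolute value: `cos` of every angle lies
between `- cos (π/(k+1))`, which is its value at the last angle, and `cos (π/(k+1))`. -/
lemma abs_eig_lt {k : ℕ} (hk : 0 < k) (l : Fin k) (hl : l ≠ ⟨0, hk⟩) :
    |eig k l| < eig k ⟨0, hk⟩ := by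
  have h0 : (⟨0, hk⟩ : Fin k) < l := by
    rw [Fin.lt_def]; exact Nat.pos_of_ne_zero fun h => hl (Fin.ext h)
  rw [abs_lt]
  refine ⟨?_, eig_strictAnti h0⟩
  have hle : eig k ⟨k - 1, by omega⟩ ≤ eig k l :=
    eig_strictAnti.antitone (by rw [Fin.le_def]; have := l.isLt; simp only; omega)
  have hlast : ang k ⟨k - 1, by omega⟩ = π - ang k ⟨0, hk⟩ := by
    have hk' : (k + 1 : ℝ) ≠ 0 := by positivity
    unfold ang
    simp only [Nat.cast_sub (Nat.succ_le_of_lt hk)]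
    push_cast
    field_simp
    ring
  unfold eig at *
  rw [hlast, cos_pi_sub] at hle
  linarith

lemma eig_zero_pos {k : ℕ} (hk : 0 < k) : 0 < eig k ⟨0, hk⟩ := by
  have h1 : ang k ⟨0, hk⟩ ≤ π / 2 := by
    have : (1 : ℝ) ≤ k := by exact_mod_cast hk
    unfold ang
    simp only [Nat.cast_zero, zero_add, one_mul]
    exact div_le_div_of_nonneg_left pi_pos.le (by norm_num) (by linarith)
  have := cos_nonneg_of_neg_pi_div_two_le_of_le (by linarith [ang_pos (⟨0, hk⟩ : Fin k), pi_pos]) h1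
  unfold eig; linarith

/-- A sum of geometric sequences, rescaled by the dominant one, tends to the dominant coefficient. -/
lemma tendsto_dominant {k : ℕ} (hk : 0 < k) (c : Fin k → ℝ) :
    Tendsto (fun m : ℕ => (∑ l, c l * eig k l ^ m) / eig k ⟨0, hk⟩ ^ m) atTop
      (nhds (c ⟨0, hk⟩)) := by
  have h0 := eig_zero_pos hk
  have h : Tendsto (fun m : ℕ => ∑ l, c l * (eig k l / eig k ⟨0, hk⟩) ^ m) atTop
      (nhds (∑ l, if l = ⟨0, hk⟩ then c l else 0)) := by
    refine tendsto_finsetSum _ fun l _ => ?_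
    split_ifs with hl
    · subst hl
      simp [div_self h0.ne']
    · have := tendsto_pow_atTop_nhds_zero_of_abs_lt_one (r := eig k l / eig k ⟨0, hk⟩) (by
        rw [abs_div, abs_of_pos h0, div_lt_one h0]; exact abs_eig_lt hk l hl)
      simpa using this.const_mul (c l)
  simp only [Finset.sum_ite_eq', Finset.mem_univ, if_true] at h
  refine h.congr fun m => ?_
  rw [Finset.sum_div]
  exact Finset.sum_congr rfl fun l _ => by rw [div_pow]; ring

/-! ### Trigonometric sums and the limit -/

/-- Multiplying by `2 sin (α/2)` makes the sum telescope; when `(n+1)α = π` it equals `cot (α/2)`. -/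
lemma sum_sin (α : ℝ) (n : ℕ) :
    2 * sin (α / 2) * ∑ j ∈ range n, sin ((j + 1 : ℝ) * α)
      = cos (α / 2) - cos ((n + 1 : ℝ) * α - α / 2) := by
  induction n with
  | zero => simp; ring_nf
  | succ n ih =>
    rw [Finset.sum_range_succ, mul_add, ih]
    push_cast
    have e : ((n : ℝ) + 1 + 1) * α - α / 2 = (n + 1 : ℝ) * α + α / 2 := by ring
    rw [e, cos_add, cos_sub]
    ring

/-- Multiplying by `4 sin α` makes the sum telescope; when `(n+1)α = π` it equals `(n+1)/2`. -/
lemma sum_sin_sq (α : ℝ) (n : ℕ) :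
    4 * sin α * ∑ j ∈ range n, sin ((j + 1 : ℝ) * α) ^ 2
      = (2 * n + 1) * sin α - sin (2 * ((n + 1 : ℝ) * α) - α) := by
  induction n with
  | zero => simp; ring_nf
  | succ n ih =>
    rw [Finset.sum_range_succ, mul_add, ih]
    push_cast
    have e : 2 * (((n : ℝ) + 1 + 1) * α) - α = 2 * ((n + 1 : ℝ) * α) + α := by ring
    rw [e, sin_add, sin_sub, cos_two_mul, cos_sq']
    ring

/-- Corollary 3.5: the limiting proportion of smooth words that are smooth cyclic. -/
theorem smooth_cyclic_proportion (k : ℕ) (hk : 1 ≤ k) :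
    Filter.Tendsto (fun n : ℕ => (scw n k : ℝ) / (sw n k : ℝ))
      Filter.atTop
      (nhds ((1 / 2) * ((k : ℝ) + 1) * (2 * Real.cos (Real.pi / ((k : ℝ) + 1)) + 1) *
        Real.tan (Real.pi / (2 * ((k : ℝ) + 1))) ^ 2)) := by
  have hk0 : 0 < k := hk
  set z : Fin k := ⟨0, hk0⟩ with hz
  have hang : ang k z = π / (k + 1) := by simp [ang, hz]
  have hpi : ((k : ℝ) + 1) * ang k z = π := by
    rw [hang]; field_simp
  have ha := ang_pos z
  have hb := ang_lt_pi z
  have hs : 0 < sin (ang k z) := sin_pos_of_pos_of_lt_pi ha hb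
  have hs2 : 0 < sin (ang k z / 2) := sin_pos_of_pos_of_lt_pi (by linarith) (by linarith)
  have hc2 : 0 < cos (ang k z / 2) := cos_pos_of_mem_Ioo ⟨by linarith, by linarith⟩
  have hN : eigNorm k z = (k + 1) / 2 := by
    have h := sum_sin_sq (ang k z) k
    rw [hpi, sin_two_pi_sub] at h
    have e : eigNorm k z = ∑ j ∈ range k, sin ((j + 1 : ℝ) * ang k z) ^ 2 :=
      Fin.sum_univ_eq_sum_range (fun j : ℕ => sin ((j + 1 : ℝ) * ang k z) ^ 2) k
    rw [← e] at h
    refine mul_left_cancel₀ (mul_pos four_pos hs).ne' ?_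
    rw [h]; ring
  have hS : ∑ i, eigMat k i z = cos (ang k z / 2) / sin (ang k z / 2) := by
    have h := sum_sin (ang k z) k
    rw [hpi, cos_pi_sub] at h
    have e : ∑ i, eigMat k i z = ∑ j ∈ range k, sin ((j + 1 : ℝ) * ang k z) :=
      Fin.sum_univ_eq_sum_range (fun j : ℕ => sin ((j + 1 : ℝ) * ang k z)) k
    rw [← e] at h
    rw [eq_div_iff hs2.ne']
    linarith
  have h1 := tendsto_dominant hk0 (eig k)
  have h2 := tendsto_dominant hk0 (fun l => (∑ i, eigMat k i l) ^ 2 / eigNorm k l)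
  have hne : (∑ i, eigMat k i z) ^ 2 / eigNorm k z ≠ 0 := by
    rw [hS, hN]; positivity
  have h3 := h1.div h2 hne
  -- The formulas for `sw` and `scw` require positive length, so the sequence is shifted by one.
  rw [← tendsto_add_atTop_iff_nat 1]
  have hlim : (1 / 2) * ((k : ℝ) + 1) * (2 * Real.cos (Real.pi / ((k : ℝ) + 1)) + 1) *
        Real.tan (Real.pi / (2 * ((k : ℝ) + 1))) ^ 2
      = eig k z / ((∑ i, eigMat k i z) ^ 2 / eigNorm k z) := by
    have e : π / (2 * ((k : ℝ) + 1)) = ang k z / 2 := by rw [hang]; field_simp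
    rw [e, ← hang, hS, hN, tan_eq_sin_div_cos]
    unfold eig
    field_simp
    ring
  rw [hlim]
  refine h3.congr fun m => ?_
  have hp : eig k z ^ m ≠ 0 := (pow_pos (eig_zero_pos hk0) m).ne'
  rw [scw_eq, sw_eq]
  simp only [Pi.div_apply, pow_succ']
  exact div_div_div_cancel_right₀ hp _ _
end

section
/- Fix an integer k ≥ 2. Then n · sn_{n,k} / scw_{n,k} tends to 1 as n → ∞; that is, the number of smooth necklaces of length n over [k] is asymptotic to scw_{n,k}/n. -/
/-!
The cyclic group of order `n` acts on smooth cyclic words by rotation, and its orbits are the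
smooth necklaces. Burnside's lemma (`burnside`) gives
`n * sn n k = ∑ r, #{words invariant under rotation by r}`.
The term `r = 0` is `scw n k`, so it remains to see that the other `n - 1` terms are negligible.

A word invariant under a rotation `r ≠ 0` is invariant under some rotation `s` with
`1 ≤ s ≤ n / 2`, hence is determined by its first `s` letters; moreover its letter at index `s` is
again its first letter `a`. The letters after index `s` can then be replaced by arbitrary letters
from `{a, b}`, where `b ≠ a` is a letter adjacent to `a`, without destroying smooth cyclicity.
This gives `2 ^ ((n - 1) / 2) * #{words invariant under r} ≤ scw n k`
(`two_pow_mul_card_fixed_le`), so that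
`1 ≤ n * sn n k / scw n k ≤ 1 + n / 2 ^ ((n - 1) / 2)`.
-/

open Real Filter Finset

/-- Every letter of an alphabet with at least two letters has a different letter adjacent to it. -/
lemma exists_ne_adjacent {k : ℕ} (hk : 2 ≤ k) (a : Fin k) :
    ∃ b : Fin k, b ≠ a ∧ |((b : ℕ) : ℤ) - ((a : ℕ) : ℤ)| ≤ 1 := by
  by_cases h : (a : ℕ) = 0
  · refine ⟨⟨1, by omega⟩, ?_, ?_⟩
    · intro h'
      have := congrArg Fin.val h'
      simp at this
      omega
    · simp [h]
  · refine ⟨⟨a - 1, by omega⟩, ?_, ?_⟩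
    · intro h'
      have := congrArg Fin.val h'
      simp at this
      omega
    · rw [abs_le]
      constructor <;> simp only <;> omega

/-- Smooth cyclicity as a single condition on cyclically consecutive letters, with indices
added modulo `n`. -/
lemma isSmoothCyclic_iff {n k : ℕ} [NeZero n] (σ : Fin n → Fin k) :
    IsSmoothCyclic σ ↔ ∀ i : Fin n, |((σ (i + 1) : ℕ) : ℤ) - ((σ i : ℕ) : ℤ)| ≤ 1 := by
  have hn : 0 < n := Nat.pos_of_ne_zero (NeZero.ne n)
  constructor
  · rintro ⟨h1, h2⟩ i
    by_cases hi : (i : ℕ) + 1 < n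
    · have e : i + 1 = ⟨i + 1, hi⟩ := by
        ext
        simp [Fin.val_add, Nat.mod_eq_of_lt hi]
      rw [e]
      exact h1 i hi
    · have e0 : i = ⟨n - 1, Nat.sub_lt hn Nat.one_pos⟩ := by
        ext
        simp only
        omega
      have e : i + 1 = ⟨0, hn⟩ := by
        ext
        have : (i : ℕ) + 1 = n := by omega
        simp [Fin.val_add, this]
      rw [e, abs_sub_comm]
      have := h2 hn
      rwa [← e0] at this
  · intro h
    refine ⟨fun i hi => ?_, fun h0 => ?_⟩
    · have := h ⟨i, by omega⟩
      have e : (⟨i, by omega⟩ : Fin n) + 1 = ⟨i + 1, hi⟩ := by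
        ext
        simp [Fin.val_add, Nat.mod_eq_of_lt hi]
      rwa [e] at this
    · have := h ⟨n - 1, by omega⟩
      have e : (⟨n - 1, by omega⟩ : Fin n) + 1 = ⟨0, h0⟩ := by
        ext
        have : n - 1 + 1 = n := by omega
        simp [Fin.val_add, this]
      rw [e, abs_sub_comm] at this
      exact this

/-- The cyclic group `ℤ/n`, realised as `Fin n`, acts on smooth cyclic words of length `n`
by rotation: `r` sends `σ` to `i ↦ σ (i + r)`. -/
@[reducible] def rotAction (n k : ℕ) [NeZero n] :
    AddAction (Fin n) {σ : Fin n → Fin k // IsSmoothCyclic σ} where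
  vadd r σ := ⟨fun i => σ.1 (i + r), by
    rw [isSmoothCyclic_iff]
    intro i
    have := (isSmoothCyclic_iff σ.1).1 σ.2 (i + r)
    rwa [add_right_comm] at this⟩
  zero_vadd σ := by
    apply Subtype.ext
    funext i
    exact congrArg σ.1 (add_zero i)
  add_vadd r s σ := by
    apply Subtype.ext
    funext i
    exact congrArg σ.1 (add_assoc i r s).symm

/-- Burnside's lemma for the rotation action. -/
lemma burnside (n k : ℕ) [NeZero n] :
    ∑ r : Fin n, Nat.card {σ : {σ : Fin n → Fin k // IsSmoothCyclic σ} //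
      ∀ i, σ.1 (i + r) = σ.1 i} = n * sn n k := by
  classical
  let _ := rotAction n k
  have hQ : sn n k = Fintype.card (Quotient (AddAction.orbitRel (Fin n)
      {σ : Fin n → Fin k // IsSmoothCyclic σ})) := by
    rw [← Nat.card_eq_fintype_card]
    refine Nat.card_congr (Quot.congrRight fun σ τ => ?_)
    constructor
    · rintro ⟨r, hr⟩
      exact ⟨r, Subtype.ext (funext fun i => (hr i).symm)⟩
    · rintro ⟨r, hr⟩
      exact ⟨r, fun i => (congrFun (congrArg Subtype.val hr) i).symm⟩
  have := AddAction.sum_card_fixedBy_eq_card_orbits_mul_card_addGroup (Fin n)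
    {σ : Fin n → Fin k // IsSmoothCyclic σ}
  rw [Fintype.card_fin, ← hQ] at this
  rw [mul_comm, ← this]
  refine Finset.sum_congr rfl fun r _ => ?_
  rw [← Nat.card_eq_fintype_card]
  refine Nat.card_congr (Equiv.subtypeEquivRight fun σ => ?_)
  rw [AddAction.mem_fixedBy]
  exact ⟨fun h => Subtype.ext (funext h), fun h i => congrFun (congrArg Subtype.val h) i⟩

/-- If the first letter `a` of a smooth cyclic word recurs at index `d`, the letters after index
`d` may be replaced without losing smooth cyclicity: each of the next `m` letters is chosen by a
bit of `f` to be `a` or a fixed letter `b a` adjacent to it, and any remaining ones are `a`. -/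
lemma extend_isSmoothCyclic {n k m d : ℕ} (b : Fin k → Fin k)
    (hb : ∀ a, |((b a : ℕ) : ℤ) - ((a : ℕ) : ℤ)| ≤ 1) (hd : d < n) (hn : 0 < n)
    (σ : Fin n → Fin k) (hσ : IsSmoothCyclic σ) (hper : σ ⟨d, hd⟩ = σ ⟨0, hn⟩)
    (f : Fin m → Bool) :
    IsSmoothCyclic (fun i : Fin n => if (i : ℕ) ≤ d then σ i else
      if h : (i : ℕ) - (d + 1) < m then
        (if f ⟨i - (d + 1), h⟩ then σ ⟨0, hn⟩ else b (σ ⟨0, hn⟩)) else σ ⟨0, hn⟩) := by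
  have hb' := abs_le.1 (hb (σ ⟨0, hn⟩))
  constructor
  · intro i hi
    simp only
    by_cases h1 : i + 1 ≤ d
    · have h2 : i ≤ d := by omega
      simp only [h1, h2, if_true]
      exact hσ.1 i hi
    · by_cases h2 : i ≤ d
      · obtain rfl : i = d := by omega
        rw [if_neg h1, if_pos h2, hper, abs_le]
        split_ifs <;> constructor <;> omega
      · rw [if_neg h1, if_neg h2, abs_le]
        split_ifs <;> constructor <;> omega
  · intro h0
    simp only
    by_cases h1 : n - 1 ≤ d
    · simp only [h1, if_true, Nat.zero_le]
      exact hσ.2 h0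
    · rw [if_neg h1, if_pos (Nat.zero_le d), abs_le]
      split_ifs <;> constructor <;> omega

/-- Words invariant under a nontrivial rotation are exponentially rare: there is an injection
from pairs (invariant word, bit string of length `(n - 1) / 2`) into all smooth cyclic words. -/
lemma two_pow_mul_card_fixed_le {n k : ℕ} [NeZero n] (hk : 2 ≤ k) (r : Fin n) (hr : r ≠ 0) :
    2 ^ ((n - 1) / 2) * Nat.card {σ : {σ : Fin n → Fin k // IsSmoothCyclic σ} //
      ∀ i, σ.1 (i + r) = σ.1 i} ≤ scw n k := by
  classical
  have hn : 0 < n := Nat.pos_of_ne_zero (NeZero.ne n)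
  -- A word invariant under `r` is also invariant under `-r`, and one of the two is at most `n / 2`.
  obtain ⟨s, hs0, hs2, hs⟩ : ∃ s : Fin n, 0 < (s : ℕ) ∧ 2 * (s : ℕ) ≤ n ∧
      ∀ σ : Fin n → Fin k, (∀ i, σ (i + r) = σ i) → ∀ i, σ (i + s) = σ i := by
    have hr0 : (r : ℕ) ≠ 0 := fun h => hr (Fin.ext (by simpa using h))
    by_cases h : 2 * (r : ℕ) ≤ n
    · exact ⟨r, by omega, h, fun σ hσ => hσ⟩
    · refine ⟨-r, ?_, ?_, fun σ hσ i => ?_⟩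
      · rw [Fin.val_neg', Nat.mod_eq_of_lt (by omega)]
        omega
      · rw [Fin.val_neg', Nat.mod_eq_of_lt (by omega)]
        omega
      · have := hσ (i + -r)
        rw [neg_add_cancel_right] at this
        exact this.symm
  choose b hbne hb using exists_ne_adjacent hk
  have hper : ∀ σ : Fin n → Fin k, (∀ i, σ (i + s) = σ i) → σ ⟨s, s.2⟩ = σ ⟨0, hn⟩ := by
    intro σ hσ
    have := hσ ⟨0, hn⟩
    rw [← this]
    congr 1
    ext
    simp
  let F : (Fin ((n - 1) / 2) → Bool) × {σ : {σ : Fin n → Fin k // IsSmoothCyclic σ} //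
      ∀ i, σ.1 (i + r) = σ.1 i} → {σ : Fin n → Fin k // IsSmoothCyclic σ} := fun p =>
    ⟨_, extend_isSmoothCyclic b hb s.2 hn p.2.1.1 p.2.1.2 (hper _ (hs _ p.2.2)) p.1⟩
  have hF : Function.Injective F := by
    rintro ⟨f, ⟨⟨σ, hσc⟩, hσ⟩⟩ ⟨g, ⟨⟨τ, hτc⟩, hτ⟩⟩ h
    have h' := fun i => congrFun (congrArg Subtype.val h) i
    simp only [F] at h'
    have hpre : ∀ i : Fin n, (i : ℕ) ≤ s → σ i = τ i := by
      intro i hi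
      simpa [hi] using h' i
    -- Invariance under `s` recovers the whole word from its first `s` letters.
    have hall : ∀ j : ℕ, ∀ hj : j < n, σ ⟨j, hj⟩ = τ ⟨j, hj⟩ := by
      intro j
      induction j using Nat.strong_induction_on with
      | _ j ih =>
        intro hj
        by_cases hjs : j ≤ s
        · exact hpre _ hjs
        · have e : (⟨j, hj⟩ : Fin n) = ⟨j - s, by omega⟩ + s := by
            ext
            have : j - s + s = j := by omega
            simp [Fin.val_add, this, Nat.mod_eq_of_lt hj]
          rw [e, hs σ hσ, hs τ hτ]
          exact ih _ (by omega) _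
    obtain rfl : σ = τ := funext fun i => hall i i.2
    have hfg : f = g := by
      funext j
      have hj := h' ⟨j + (s + 1), by omega⟩
      have h1 : ¬ ((j : ℕ) + (s + 1) ≤ s) := by omega
      have h2 : (j : ℕ) + (s + 1) - (s + 1) = j := by omega
      simp only [h1, if_false, h2, Fin.is_lt, dite_true, Fin.eta] at hj
      have := hbne (σ ⟨0, hn⟩)
      cases hf : f j <;> cases hg : g j <;>
        simp only [hf, hg, if_true, Bool.false_eq_true, if_false] at hj <;>
        first | rfl | exact absurd hj this | exact absurd hj.symm this
    rw [hfg]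
  have := Nat.card_le_card_of_injective F hF
  rw [Nat.card_prod] at this
  simpa [scw] using this

lemma scw_pos {n k : ℕ} (hk : 2 ≤ k) : 0 < scw n k := by
  have : Nonempty {σ : Fin n → Fin k // IsSmoothCyclic σ} :=
    ⟨⟨fun _ => ⟨0, by omega⟩, fun _ _ => by simp, fun _ => by simp⟩⟩
  exact Nat.card_pos

lemma scw_le_mul_sn (n k : ℕ) [NeZero n] : scw n k ≤ n * sn n k := by
  rw [← burnside]
  refine le_trans (le_of_eq ?_) (Finset.single_le_sum (fun _ _ => Nat.zero_le _)
    (Finset.mem_univ (0 : Fin n)))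
  exact Nat.card_congr (Equiv.subtypeUnivEquiv fun σ i => by rw [add_zero]).symm

lemma mul_sn_le {n k : ℕ} [NeZero n] (hk : 2 ≤ k) :
    2 ^ ((n - 1) / 2) * (n * sn n k) ≤ (2 ^ ((n - 1) / 2) + n) * scw n k := by
  classical
  rw [← burnside, ← Finset.add_sum_erase _ _ (Finset.mem_univ (0 : Fin n)), mul_add, add_mul]
  refine add_le_add (Nat.mul_le_mul_left _ (Nat.card_le_card_of_injective _
    Subtype.val_injective)) ?_
  rw [Finset.mul_sum]
  refine (Finset.sum_le_card_nsmul _ _ (scw n k) fun r hr =>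
    two_pow_mul_card_fixed_le hk r (Finset.ne_of_mem_erase hr)).trans ?_
  rw [smul_eq_mul]
  refine Nat.mul_le_mul_right _ ((Finset.card_le_univ _).trans ?_)
  simp

lemma tendsto_error :
    Tendsto (fun n : ℕ => (n : ℝ) / 2 ^ ((n - 1) / 2)) atTop (nhds 0) := by
  have h1 : Tendsto (fun m : ℕ => (2 * ((m : ℝ) * (1 / 2) ^ m) + 2 * (1 / 2) ^ m)) atTop
      (nhds 0) := by
    have a := tendsto_self_mul_const_pow_of_lt_one (r := (1 / 2 : ℝ)) (by norm_num) (by norm_num)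
    have b := tendsto_pow_atTop_nhds_zero_of_lt_one (r := (1 / 2 : ℝ)) (by norm_num) (by norm_num)
    simpa using (a.const_mul 2).add (b.const_mul 2)
  have h2 : Tendsto (fun n : ℕ => (n - 1) / 2) atTop atTop :=
    (Nat.tendsto_div_const_atTop (by norm_num)).comp (tendsto_sub_atTop_nat 1)
  refine squeeze_zero (fun n => by positivity) (fun n => ?_) (h1.comp h2)
  have h3 : (n : ℝ) ≤ 2 * (((n - 1) / 2 : ℕ) : ℝ) + 2 := by
    have : n ≤ 2 * ((n - 1) / 2) + 2 := by omega
    exact_mod_cast this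
  simp only [Function.comp, one_div, inv_pow]
  rw [div_eq_mul_inv]
  calc _ ≤ (2 * (((n - 1) / 2 : ℕ) : ℝ) + 2) * ((2 : ℝ) ^ ((n - 1) / 2))⁻¹ := by gcongr
    _ = _ := by ring

/-- The number of smooth necklaces is asymptotic to `scw_{n,k} / n`. -/
theorem smooth_necklaces_asymptotics (k : ℕ) (hk : 2 ≤ k) :
    Filter.Tendsto (fun n : ℕ => (n : ℝ) * (sn n k : ℝ) / (scw n k : ℝ))
      Filter.atTop (nhds 1) := by
  refine tendsto_of_tendsto_of_tendsto_of_le_of_le' tendsto_const_nhds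
    (by simpa using tendsto_error.const_add 1) ?_ ?_
  all_goals
    filter_upwards [eventually_gt_atTop 0] with n hn
    have : NeZero n := ⟨hn.ne'⟩
    have hpos : (0 : ℝ) < scw n k := by exact_mod_cast scw_pos hk
  · rw [le_div_iff₀ hpos, one_mul]
    exact_mod_cast scw_le_mul_sn n k
  · have h : (2 : ℝ) ^ ((n - 1) / 2) * (n * sn n k) ≤ (2 ^ ((n - 1) / 2) + n) * scw n k := by
      exact_mod_cast mul_sn_le (n := n) hk
    have h2 : (0 : ℝ) < 2 ^ ((n - 1) / 2) := by positivity
    rw [div_le_iff₀ hpos, one_add_div h2.ne', div_mul_eq_mul_div, le_div_iff₀ h2]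
    linarith
end

section
/- For every natural number n ≥ 0, the number of smooth words of length n over the alphabet [3] equals (1/2)(1 + √2)^{n+1} + (1/2)(1 − √2)^{n+1}. -/
/-!
The letters are `0`, `1`, `2`. Let `f n a` (`smoothFrom n a`) be the number of words `τ` of length
`n` such that `aτ` is smooth. Splitting off the
first letter of `τ` gives `f (n + 1) a = ∑ b, f n b`, the sum being over the letters `b` within
distance `1` of `a`. Over three letters the middle one is within distance `1` of every letter, so
prepending it to a word does not affect smoothness, and the number sought is `f n 1`. The recurrence
makes `f n 0 = f n 2 = xₙ` and `f n 1 = yₙ` with `xₙ₊₁ = xₙ + yₙ`, `yₙ₊₁ = 2 xₙ + yₙ`,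
`x₀ = y₀ = 1`; hence `yₙ ± √2 xₙ = (1 ± √2) ^ (n + 1)`.
-/

open Real Filter Finset

lemma isSmooth_cons {n k : ℕ} (a : Fin k) (σ : Fin (n + 1) → Fin k) :
    IsSmooth (Fin.cons a σ : Fin (n + 2) → Fin k) ↔
      |((σ 0 : ℕ) : ℤ) - ((a : ℕ) : ℤ)| ≤ 1 ∧ IsSmooth σ := by
  have hc (i : ℕ) (hi : i + 1 < n + 2) :
      (Fin.cons a σ : Fin (n + 2) → Fin k) ⟨i + 1, hi⟩ = σ ⟨i, by omega⟩ :=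
    Fin.cons_succ (α := fun _ => Fin k) a σ ⟨i, by omega⟩
  have hz (h : 0 < n + 2) : (Fin.cons a σ : Fin (n + 2) → Fin k) ⟨0, h⟩ = a :=
    Fin.cons_zero (α := fun _ => Fin k) a σ
  constructor
  · intro h
    refine ⟨?_, fun i hi => ?_⟩
    · have := h 0 (by omega)
      rwa [hc, hz] at this
    · have := h (i + 1) (by omega)
      rwa [hc, hc] at this
  · rintro ⟨h0, h⟩ i hi
    cases i with
    | zero => rw [hc, hz]; exact h0
    | succ i => rw [hc, hc]; exact h i (by omega)

lemma isSmooth_cons_one {n : ℕ} (σ : Fin n → Fin 3) :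
    IsSmooth (Fin.cons 1 σ : Fin (n + 1) → Fin 3) ↔ IsSmooth σ := by
  cases n with
  | zero => exact ⟨fun _ i hi => by omega, fun _ i hi => by omega⟩
  | succ n =>
    rw [isSmooth_cons, and_iff_right]
    generalize σ 0 = b
    revert b
    decide

lemma card_subtype_cons {n : ℕ} {α : Type*} [Fintype α] (P : (Fin (n + 1) → α) → Prop) :
    Nat.card {σ // P σ} = ∑ b, Nat.card {τ : Fin n → α // P (Fin.cons b τ)} := by
  rw [← Nat.card_sigma]
  exact Nat.card_congr
    { toFun := fun σ => ⟨σ.1 0, Fin.tail σ.1, by rw [Fin.cons_self_tail]; exact σ.2⟩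
      invFun := fun p => ⟨Fin.cons p.1 p.2.1, p.2.2⟩
      left_inv := fun σ => Subtype.ext (Fin.cons_self_tail σ.1)
      right_inv := fun _ => rfl }

/-- The number of words `τ` of length `n` over three letters such that the word `aτ`, of length
`n + 1`, is smooth. -/
noncomputable def smoothFrom (n : ℕ) (a : Fin 3) : ℕ :=
  Nat.card {τ : Fin n → Fin 3 // IsSmooth (Fin.cons a τ : Fin (n + 1) → Fin 3)}

lemma smoothFrom_zero (a : Fin 3) : smoothFrom 0 a = 1 := by
  have h (τ : Fin 0 → Fin 3) : IsSmooth (Fin.cons a τ : Fin 1 → Fin 3) := fun i hi => by omega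
  simp [smoothFrom, h]

lemma smoothFrom_succ (n : ℕ) (a : Fin 3) :
    smoothFrom (n + 1) a =
      ∑ b : Fin 3, if |((b : ℕ) : ℤ) - ((a : ℕ) : ℤ)| ≤ 1 then smoothFrom n b else 0 := by
  rw [smoothFrom, card_subtype_cons]
  refine Finset.sum_congr rfl fun b _ => ?_
  simp only [isSmooth_cons a, Fin.cons_zero]
  split_ifs with h <;> simp [h, smoothFrom]

lemma smoothFrom_closed (n : ℕ) :
    smoothFrom n 2 = smoothFrom n 0 ∧
      (smoothFrom n 1 : ℝ) + √2 * smoothFrom n 0 = (1 + √2) ^ (n + 1) ∧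
      (smoothFrom n 1 : ℝ) - √2 * smoothFrom n 0 = (1 - √2) ^ (n + 1) := by
  induction n with
  | zero => simp [smoothFrom_zero]
  | succ n ih =>
    obtain ⟨h2, hp, hm⟩ := ih
    have e0 : smoothFrom (n + 1) 0 = smoothFrom n 0 + smoothFrom n 1 := by
      simp [smoothFrom_succ, Fin.sum_univ_three]
    have e1 : smoothFrom (n + 1) 1 = 2 * smoothFrom n 0 + smoothFrom n 1 := by
      simp [smoothFrom_succ, Fin.sum_univ_three, h2]
      ring
    have e2 : smoothFrom (n + 1) 2 = smoothFrom n 0 + smoothFrom n 1 := by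
      simp [smoothFrom_succ, Fin.sum_univ_three, h2, add_comm]
    have hs : √2 * √2 = (2 : ℝ) := Real.mul_self_sqrt (by norm_num)
    refine ⟨by rw [e2, e0], ?_, ?_⟩
    · rw [pow_succ, ← hp, e0, e1]
      push_cast
      linear_combination -(smoothFrom n 0 : ℝ) * hs
    · rw [pow_succ, ← hm, e0, e1]
      push_cast
      linear_combination -(smoothFrom n 0 : ℝ) * hs

/-- The number of smooth words over a `3`-letter alphabet. -/
theorem smooth_words_three (n : ℕ) :
    (sw n 3 : ℝ) =
      (1 / 2) * (1 + Real.sqrt 2) ^ (n + 1) + (1 / 2) * (1 - Real.sqrt 2) ^ (n + 1) := by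
  have h : sw n 3 = smoothFrom n 1 := by simp only [sw, smoothFrom, isSmooth_cons_one]
  obtain ⟨-, hp, hm⟩ := smoothFrom_closed n
  rw [h, ← hp, ← hm]
  ring
end

section
/- For every integer n ≥ 1, the number of smooth words of length n over the alphabet [5] equals ((2 + √3)/6)(1 + √3)^{n+1} + ((2 − √3)/6)(1 − √3)^{n+1} + 1/3. -/
open Real Filter Finset

/-!
The transfer-matrix method, with words grouped by their first letter. If `smoothTails k n i` counts
the words `τ` of length `n` for which `i τ` is smooth, then the vector `smoothTails k (n + 1)` is
the image of `smoothTails k n` under the adjacency matrix of the path with loops on `k` vertices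
(`smoothTails_succ`). For `k = 5` the start vector is `(1, 1, 1, 1, 1)`, which is symmetric under
reversal of the alphabet, so it lies in the span of three eigenvectors of that matrix:
`(1, √3, 2, √3, 1)` for `1 + √3`, `(1, -√3, 2, -√3, 1)` for `1 - √3`, and `(1, 0, -1, 0, 1)` for
`1`. Its coordinates are `(2 + √3) / 6`, `(2 - √3) / 6` and `1 / 3`, which gives every entry in
closed form (`smoothTails_five`). Summing the entries gives the count, since the entries of the
three eigenvectors sum to `(1 + √3) ^ 2`, `(1 - √3) ^ 2` and `1`.
-/

open Classical in
/-- The number of words `τ` of length `n` such that the word `i τ`, of length `n + 1`, is smooth. -/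
noncomputable def smoothTails (k n : ℕ) (i : Fin k) : ℕ :=
  ∑ τ : Fin n → Fin k, if IsSmooth (Fin.cons i τ : Fin (n + 1) → Fin k) then 1 else 0

lemma isSmooth_cons_cons {k n : ℕ} (i j : Fin k) (τ : Fin n → Fin k) :
    IsSmooth (Fin.cons i (Fin.cons j τ : Fin (n + 1) → Fin k) : Fin (n + 2) → Fin k) ↔
      |((j : ℕ) : ℤ) - ((i : ℕ) : ℤ)| ≤ 1 ∧
        IsSmooth (Fin.cons j τ : Fin (n + 1) → Fin k) := by
  constructor
  · intro h
    refine ⟨?_, fun m hm => ?_⟩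
    · have h0 := h 0 (by omega)
      exact h0
    · have h1 := h (m + 1) (by omega)
      exact h1
  · rintro ⟨h0, h⟩ m hm
    cases m with
    | zero => exact h0
    | succ m =>
      have h1 := h m (by omega)
      exact h1

lemma smoothTails_zero (k : ℕ) (i : Fin k) : smoothTails k 0 i = 1 := by
  have h (τ : Fin 0 → Fin k) : IsSmooth (Fin.cons i τ : Fin 1 → Fin k) :=
    fun m hm => absurd hm (by omega)
  simp [smoothTails, h]

lemma smoothTails_succ (k n : ℕ) (i : Fin k) :
    smoothTails k (n + 1) i =
      ∑ j : Fin k, if |((j : ℕ) : ℤ) - ((i : ℕ) : ℤ)| ≤ 1 then smoothTails k n j else 0 := by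
  classical
  unfold smoothTails
  rw [← (Fin.consEquiv (fun _ : Fin (n + 1) => Fin k)).sum_comp, Fintype.sum_prod_type]
  refine Finset.sum_congr rfl fun j _ => ?_
  have key (τ : Fin n → Fin k) := isSmooth_cons_cons i j τ
  split_ifs with h
  · refine Finset.sum_congr rfl fun τ _ => if_congr ?_ rfl rfl
    exact (key τ).trans (and_iff_right h)
  · refine Finset.sum_eq_zero fun τ _ => if_neg ?_
    exact fun hs => h ((key τ).1 hs).1

lemma sw_succ_s19 (k n : ℕ) : sw (n + 1) k = ∑ i : Fin k, smoothTails k n i := by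
  classical
  unfold sw smoothTails
  rw [Nat.card_eq_fintype_card, Fintype.card_subtype, Finset.card_filter,
    ← (Fin.consEquiv (fun _ : Fin (n + 1) => Fin k)).sum_comp, Fintype.sum_prod_type]
  rfl

/-- The expansion of the vector `smoothTails 5 n` in the eigenvectors of the transfer matrix. -/
lemma smoothTails_five (n : ℕ) (i : Fin 5) :
    (smoothTails 5 n i : ℝ) =
      (2 + √3) / 6 * (1 + √3) ^ n * ![1, √3, 2, √3, 1] i +
        (2 - √3) / 6 * (1 - √3) ^ n * ![1, -√3, 2, -√3, 1] i +
          1 / 3 * ![1, 0, -1, 0, 1] i := by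
  have h3 : √3 ^ 2 = (3 : ℝ) := Real.sq_sqrt (by norm_num)
  induction n generalizing i with
  | zero =>
    rw [smoothTails_zero]
    fin_cases i <;> simp <;> linarith
  | succ n ih =>
    rw [smoothTails_succ]
    push_cast
    simp only [ih, pow_succ]
    generalize (1 + √3) ^ n = x
    generalize (1 - √3) ^ n = y
    fin_cases i <;> simp [Fin.sum_univ_five] <;> grind

/-- The number of smooth words over a `5`-letter alphabet. -/
theorem smooth_words_five (n : ℕ) (hn : 1 ≤ n) :
    (sw n 5 : ℝ) =
      ((2 + Real.sqrt 3) / 6) * (1 + Real.sqrt 3) ^ (n + 1) +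
        ((2 - Real.sqrt 3) / 6) * (1 - Real.sqrt 3) ^ (n + 1) + 1 / 3 := by
  obtain ⟨m, rfl⟩ : ∃ m, n = m + 1 := ⟨n - 1, by omega⟩
  have h3 : √3 ^ 2 = (3 : ℝ) := Real.sq_sqrt (by norm_num)
  rw [sw_succ_s19]
  push_cast
  simp only [smoothTails_five, Fin.sum_univ_five, pow_succ]
  generalize (1 + √3) ^ m = x
  generalize (1 - √3) ^ m = y
  simp
  grind
end
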